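/- Every Stone distributive nearlattice is normal: if a⊤ ⋎ a⊤⊤ = A for all a, then (a ∨ b)⊤ = a⊤ ⋎ b⊤ for all a, b. -/

import Mathlib

/-- A distributive nearlattice, presented (following Araújo–Kinyon) as a
join-semilattice with top together with its canonical ternary operation
`m x y z = (x ⊔ z) ⊓_z (y ⊔ z)` (the meet taken in the principal filter `[z)`),
satisfying the Araújo–Kinyon identities.  This is equivalent to: every
principal filter is a bounded distributive lattice. -/
class DNearlattice (A : Type*) extends SemilatticeSup A, OrderTop A where
  m : A → A → A → A
  sup_eq_m : ∀ x y : A, x ⊔ y = m x x y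
  m_ax2 : ∀ x y : A, m x y x = x
  m_ax3 : ∀ u w x y z : A,
    m (m x y z) (m y (m u x z) z) w = m w w (m y (m x u z) z)
  m_ax4 : ∀ w x y z : A,
    m x (m y y z) w = m (m x y w) (m x y w) (m x z w)

variable {A : Type*} [DNearlattice A]

/-- The annihilator `a⊤ = {x | x ⊔ a = ⊤}`. -/
def ann (a : A) : Set A := {x : A | x ⊔ a = ⊤}

/-- The annihilator of a set (filter): `F⊤ = {x | ∀ f ∈ F, x ⊔ f = ⊤}`. -/
def annF (F : Set A) : Set A := {x : A | ∀ f ∈ F, x ⊔ f = ⊤}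

/-- The double annihilator `a⊤⊤`. -/
def dann (a : A) : Set A := annF (ann a)

/-- A filter: contains `⊤`, is upward closed, and is closed under existing
binary meets (greatest lower bounds). -/
def IsFil (F : Set A) : Prop :=
  ⊤ ∈ F ∧ (∀ a b : A, a ≤ b → a ∈ F → b ∈ F) ∧
    (∀ a b c : A, a ∈ F → b ∈ F → IsGLB {a, b} c → c ∈ F)

/-- The filter generated by a set: the intersection of all filters containing it. -/
def filGen (X : Set A) : Set A := ⋂₀ {F : Set A | IsFil F ∧ X ⊆ F}

/-- The join of two filters in the lattice of filters. -/
def filJoin (F G : Set A) : Set A := filGen (F ∪ G)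

/-- An ideal: downward closed and closed under joins. -/
def IsIdl (I : Set A) : Prop :=
  (∀ a b : A, a ≤ b → b ∈ I → a ∈ I) ∧ (∀ a b : A, a ∈ I → b ∈ I → a ⊔ b ∈ I)

/-- A prime ideal: a nonempty proper ideal such that whenever an existing
meet `a ∧ b` lies in it, `a` or `b` lies in it. -/
def IsPrimeIdl (P : Set A) : Prop :=
  IsIdl P ∧ P.Nonempty ∧ P ≠ Set.univ ∧
    (∀ a b c : A, IsGLB {a, b} c → c ∈ P → a ∈ P ∨ b ∈ P)

/-- A maximal ideal: a nonempty proper ideal maximal among proper ideals. -/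
def IsMaxIdl (I : Set A) : Prop :=
  IsIdl I ∧ I.Nonempty ∧ I ≠ Set.univ ∧
    (∀ J : Set A, IsIdl J → I ⊆ J → J = I ∨ J = Set.univ)

/-- A prime filter: `a ⊔ b ∈ F` implies `a ∈ F` or `b ∈ F`. -/
def IsPrimeFil (F : Set A) : Prop :=
  IsFil F ∧ ∀ a b : A, a ⊔ b ∈ F → a ∈ F ∨ b ∈ F

/-- An α-filter: a filter containing `a⊤⊤` for each of its elements `a`. -/
def IsAlphaFil (F : Set A) : Prop := IsFil F ∧ ∀ a ∈ F, dann a ⊆ F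

/-- An α-ideal: an ideal `I` such that `I ∩ a⊤⊤ ≠ ∅` implies `a ∈ I`. -/
def IsAlphaIdl (I : Set A) : Prop :=
  IsIdl I ∧ ∀ a : A, (I ∩ dann a).Nonempty → a ∈ I

/-- Quasicomplemented: every `a⊤⊤` is of the form `b⊤`. -/
def Quasicomplemented (B : Type*) [DNearlattice B] : Prop :=
  ∀ a : B, ∃ b : B, dann a = ann b

/-- Normal: `(a ⊔ b)⊤ = a⊤ ⋎ b⊤` for all `a, b`. -/
def NormalNL (B : Type*) [DNearlattice B] : Prop :=
  ∀ a b : B, ann (a ⊔ b) = filJoin (ann a) (ann b)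

/-- Stone: `a⊤ ⋎ a⊤⊤ = A` for all `a`. -/
def StoneNL (B : Type*) [DNearlattice B] : Prop :=
  ∀ a : B, filJoin (ann a) (dann a) = Set.univ


namespace DNearlattice

theorem m_sup (x y z w : A) : m x (y ⊔ z) w = m x y w ⊔ m x z w := by
  rw [sup_eq_m y z, m_ax4, ← sup_eq_m]

theorem m_mono (x w : A) {y z : A} (h : y ≤ z) : m x y w ≤ m x z w := by
  rw [← sup_eq_right.2 h, m_sup]; exact le_sup_left

theorem m_le_swap (x y z : A) : m y x z ≤ m x y z := by
  have h := m_ax3 x (m x y z) x y z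
  rw [m_ax2, ← sup_eq_m, ← sup_eq_m] at h
  have h1 : m y (x ⊔ z) z ≤ m x y z := by
    rw [h]; exact le_sup_right
  exact (m_mono y z le_sup_left).trans h1

theorem m_comm (x y z : A) : m x y z = m y x z :=
  le_antisymm (m_le_swap y x z) (m_le_swap x y z)

theorem m_of_le (w : A) {x p : A} (h : x ≤ p) : m p x w = w ⊔ x := by
  have h1 := m_ax3 x w p p x
  have h2 : m p x x = x := by rw [m_comm, m_ax2]
  have h3 : m x p x = x := m_ax2 x p
  have h4 : m p p x = p := by rw [← sup_eq_m]; exact sup_eq_left.2 h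
  rw [h3, h2, h2, h4, ← sup_eq_m] at h1
  exact h1

theorem m_le_left (x y w : A) : m x y w ≤ x ⊔ w := by
  refine (m_mono x w (le_sup_left : y ≤ y ⊔ x)).trans ?_
  have := m_of_le w (le_sup_right : x ≤ y ⊔ x)
  rw [m_comm] at this
  rw [this, sup_comm]

theorem m_le_right (x y w : A) : m x y w ≤ y ⊔ w := by
  rw [m_comm]; exact m_le_left y x w

theorem glb_sup {p q c : A} (h : IsGLB {p, q} c) (x : A) :
    IsGLB {p ⊔ x, q ⊔ x} (c ⊔ x) := by
  have hp : c ≤ p := h.1 (by simp)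
  have hq : c ≤ q := h.1 (by simp)
  constructor
  · rintro y (rfl | rfl)
    · exact sup_le_sup_right hp x
    · exact sup_le_sup_right hq x
  · intro d hd
    have d1 : d ≤ p ⊔ x := hd (by simp)
    have d2 : d ≤ q ⊔ x := hd (by simp)
    have h1 : d ≤ m (p ⊔ x) (q ⊔ x) c := by
      refine le_trans ?_ (m_mono _ c d2)
      rw [m_of_le c d1]; exact le_sup_right
    refine h1.trans ?_
    rw [m_sup, m_comm (p ⊔ x) q, m_sup]
    have k : m q p c ≤ c := by
      apply h.2
      rintro y (rfl | rfl)
      · exact (m_le_right _ _ _).trans (sup_le le_rfl hp)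
      · exact (m_le_left _ _ _).trans (sup_le le_rfl hq)
    refine sup_le (sup_le (k.trans le_sup_left) ?_) ?_
    · rw [sup_comm c x]; exact m_le_right _ _ _
    · rw [sup_comm c x]; exact m_le_right _ _ _

end DNearlattice

theorem isFil_filGen (X : Set A) : IsFil (filGen X) := by
  refine ⟨fun F hF => hF.1.1, fun a b hab ha F hF => hF.1.2.1 a b hab (ha F hF), 
    fun a b c ha hb hc F hF => hF.1.2.2 a b c (ha F hF) (hb F hF) hc⟩

theorem subset_filGen (X : Set A) : X ⊆ filGen X := fun _ hx _ hF => hF.2 hx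

theorem isFil_ann (a : A) : IsFil (ann a) := by
  refine ⟨by simp [ann], ?_, ?_⟩
  · intro x y hxy hx
    exact top_le_iff.1 ((show x ⊔ a = ⊤ from hx) ▸ sup_le_sup_right hxy a)
  · intro x y c hx hy hc
    have h := DNearlattice.glb_sup hc a
    rw [show x ⊔ a = ⊤ from hx, show y ⊔ a = ⊤ from hy] at h
    exact top_le_iff.1 (h.2 (by rintro z (rfl | rfl) <;> exact le_rfl))

/-- Every Stone distributive nearlattice is normal. -/
theorem stmt17 (hs : StoneNL A) : NormalNL A := by
  intro a b
  have hJ : IsFil (filJoin (ann a) (ann b)) := isFil_filGen _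
  apply Set.Subset.antisymm
  · intro c hc
    have hc' : c ⊔ (a ⊔ b) = ⊤ := hc
    have hmem : c ∈ filJoin (ann a) (dann a) := by rw [hs a]; trivial
    have key := hmem {x : A | x ⊔ c ∈ filJoin (ann a) (ann b)} ⟨⟨?_, ?_, ?_⟩, ?_⟩
    · simpa using key
    · simpa using hJ.1
    · intro x y hxy hx
      exact hJ.2.1 _ _ (sup_le_sup_right hxy c) hx
    · intro x y z hx hy hz
      exact hJ.2.2 _ _ _ hx hy (DNearlattice.glb_sup hz c)
    · rintro y (hy | hy)
      · exact hJ.2.1 _ _ le_sup_left (subset_filGen _ (Or.inl hy))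
      · refine subset_filGen _ (Or.inr ?_)
        have h1 : c ⊔ b ∈ ann a := by
          show c ⊔ b ⊔ a = ⊤
          rw [sup_assoc, sup_comm b a]; exact hc'
        show y ⊔ c ⊔ b = ⊤
        rw [sup_assoc]; exact hy _ h1
  · intro c hc
    refine hc _ ⟨isFil_ann _, ?_⟩
    rintro y (hy | hy)
    · show y ⊔ (a ⊔ b) = ⊤
      rw [← sup_assoc, show y ⊔ a = ⊤ from hy, top_sup_eq]
    · show y ⊔ (a ⊔ b) = ⊤
      rw [sup_comm a b, ← sup_assoc, show y ⊔ b = ⊤ from hy, top_sup_eq]
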